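/- For every integer n ≥ 1, the following are pairwise equivalent over PA⁻ + IΣn: (1) PΣn; (2) for every partial Σn-definable function f and all elements a and b, there exists an approximation s to f of length b with s(0) ≥ a; (3) for every partial Σn-definable function f, every total Σn-definable function g, and every b, there exists a g-stretched approximation to f of length b. -/

import Mathlib

/- Shared development: first-order arithmetic in the language {0,1,+,·,<},
   the arithmetic hierarchy, fragments of arithmetic, and coded finite
   combinatorics inside models. -/

open FirstOrder Language

namespace ArithFC

/-- Function symbols of the language of arithmetic: 0, 1, +, ·. -/
inductive Func : ℕ → Type
  | zero : Func 0
  | one : Func 0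
  | add : Func 2
  | mul : Func 2

/-- Relation symbols of the language of arithmetic: <. -/
inductive Rel : ℕ → Type
  | lt : Rel 2

/-- The first-order language {0, 1, +, ·, <}. -/
def lang : Language :=
  { Functions := Func, Relations := Rel }

section Instances

variable (M : Type) [lang.Structure M]

instance : Zero M := ⟨Structure.funMap (L := lang) Func.zero ![]⟩
instance : One M := ⟨Structure.funMap (L := lang) Func.one ![]⟩
instance : Add M := ⟨fun x y => Structure.funMap (L := lang) Func.add ![x, y]⟩
instance : Mul M := ⟨fun x y => Structure.funMap (L := lang) Func.mul ![x, y]⟩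
instance : LT M := ⟨fun x y => Structure.RelMap (L := lang) Rel.lt ![x, y]⟩
instance : LE M := ⟨fun x y => x < y ∨ x = y⟩

end Instances

/-- The numeral `n` in a model. -/
def numM (M : Type) [lang.Structure M] : ℕ → M
  | 0 => 0
  | n + 1 => numM M n + 1

/-- `b` is nonstandard (greater than every numeral). -/
def Nonstd {M : Type} [lang.Structure M] (b : M) : Prop := ∀ n : ℕ, numM M n < b

/-- The atomic formula `t < u`. -/
def ltFm {α : Type} {n : ℕ} (t u : lang.Term (α ⊕ Fin n)) : lang.BoundedFormula α n :=
  BoundedFormula.rel (Rel.lt : lang.Relations 2) ![t, u]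

/-- Δ₀ formulas: built from atomic formulas by boolean connectives and
bounded universal quantification (this generates, up to logical equivalence,
the usual class of bounded formulas). -/
inductive IsDelta0 {α : Type} : ∀ n : ℕ, lang.BoundedFormula α n → Prop
  | falsum (n : ℕ) : IsDelta0 n BoundedFormula.falsum
  | equal (n : ℕ) (t u : lang.Term (α ⊕ Fin n)) : IsDelta0 n (BoundedFormula.equal t u)
  | rel (n l : ℕ) (R : lang.Relations l) (ts : Fin l → lang.Term (α ⊕ Fin n)) :
      IsDelta0 n (BoundedFormula.rel R ts)
  | imp (n : ℕ) {φ ψ : lang.BoundedFormula α n} :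
      IsDelta0 n φ → IsDelta0 n ψ → IsDelta0 n (φ.imp ψ)
  | bdAll (n : ℕ) (t : lang.Term (α ⊕ Fin n)) {φ : lang.BoundedFormula α (n + 1)} :
      IsDelta0 (n + 1) φ →
      IsDelta0 n
        (BoundedFormula.all ((ltFm (Term.var (Sum.inr (Fin.last n))) (t.liftAt 1 n)).imp φ))

mutual
  /-- Σ_m formulas. -/
  inductive SigmaFm {α : Type} : ℕ → ∀ n : ℕ, lang.BoundedFormula α n → Prop
    | delta0 (m n : ℕ) {φ : lang.BoundedFormula α n} : IsDelta0 n φ → SigmaFm m n φ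
    | ofPi (m n : ℕ) {φ : lang.BoundedFormula α n} : PiFm m n φ → SigmaFm (m + 1) n φ
    | ex (m n : ℕ) {φ : lang.BoundedFormula α (n + 1)} :
        SigmaFm (m + 1) (n + 1) φ → SigmaFm (m + 1) n φ.ex
  /-- Π_m formulas. -/
  inductive PiFm {α : Type} : ℕ → ∀ n : ℕ, lang.BoundedFormula α n → Prop
    | delta0 (m n : ℕ) {φ : lang.BoundedFormula α n} : IsDelta0 n φ → PiFm m n φ
    | ofSigma (m n : ℕ) {φ : lang.BoundedFormula α n} : SigmaFm m n φ → PiFm (m + 1) n φ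
    | all (m n : ℕ) {φ : lang.BoundedFormula α (n + 1)} :
        PiFm (m + 1) (n + 1) φ → PiFm (m + 1) n φ.all
end

/-- A `k`-ary relation on `M` is Σ_m-definable (with parameters from `M`). -/
def IsSigmaDef (m : ℕ) (M : Type) [lang.Structure M] {k : ℕ} (R : (Fin k → M) → Prop) : Prop :=
  ∃ (p : ℕ) (φ : lang.BoundedFormula (Fin k ⊕ Fin p) 0) (w : Fin p → M),
    SigmaFm m 0 φ ∧ ∀ v : Fin k → M, R v ↔ φ.Realize (Sum.elim v w) finZeroElim

/-- A subset of `M` is Σ_m-definable with parameters. -/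
def SigmaDef1 (m : ℕ) (M : Type) [lang.Structure M] (A : Set M) : Prop :=
  IsSigmaDef m M (k := 1) fun v => v 0 ∈ A

/-- A binary relation on `M` is Σ_m-definable with parameters. -/
def SigmaDef2 (m : ℕ) (M : Type) [lang.Structure M] (R : M → M → Prop) : Prop :=
  IsSigmaDef m M (k := 2) fun v => R (v 0) (v 1)

/-- A ternary relation on `M` is Σ_m-definable with parameters. -/
def SigmaDef3 (m : ℕ) (M : Type) [lang.Structure M] (R : M → M → M → Prop) : Prop :=
  IsSigmaDef m M (k := 3) fun v => R (v 0) (v 1) (v 2)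

/-- `M` is a model of PA⁻ (the nonnegative part of a discretely ordered
commutative semiring). -/
structure PAm (M : Type) [lang.Structure M] : Prop where
  add_assoc : ∀ x y z : M, x + y + z = x + (y + z)
  add_comm : ∀ x y : M, x + y = y + x
  mul_assoc : ∀ x y z : M, x * y * z = x * (y * z)
  mul_comm : ∀ x y : M, x * y = y * x
  ldistrib : ∀ x y z : M, x * (y + z) = x * y + x * z
  add_zero : ∀ x : M, x + 0 = x
  mul_zero : ∀ x : M, x * 0 = 0
  mul_one : ∀ x : M, x * 1 = x
  lt_trans : ∀ x y z : M, x < y → y < z → x < z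
  lt_irrefl : ∀ x : M, ¬x < x
  lt_total : ∀ x y : M, x < y ∨ x = y ∨ y < x
  add_lt_add : ∀ x y z : M, x < y → x + z < y + z
  mul_lt_mul : ∀ x y z : M, x < y → 0 < z → x * z < y * z
  sub_exists : ∀ x y : M, x < y → ∃ z, x + z = y
  zero_lt_one : (0 : M) < 1
  discrete : ∀ x : M, 0 < x → (1 : M) ≤ x
  zero_le : ∀ x : M, (0 : M) ≤ x

/-- `M` satisfies the Σ_m-induction scheme (with parameters). -/
def ISig (m : ℕ) (M : Type) [lang.Structure M] : Prop :=
  ∀ A : Set M, SigmaDef1 m M A → (0 : M) ∈ A → (∀ x, x ∈ A → x + 1 ∈ A) → ∀ x, x ∈ A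

/-- `M` satisfies the Σ_m-collection (bounding) scheme (with parameters). -/
def BSig (m : ℕ) (M : Type) [lang.Structure M] : Prop :=
  ∀ R : M → M → Prop, SigmaDef2 m M R → ∀ a : M,
    (∀ x, x < a → ∃ y, R x y) → ∃ b, ∀ x, x < a → ∃ y, y < b ∧ R x y

section Coding

variable {M : Type} [lang.Structure M]

/-- `z` is the Cantor pair `⟨x, y⟩`: `2z = (x+y)(x+y+1) + 2y`. -/
def IsPairC (z x y : M) : Prop := z + z = (x + y) * (x + y + 1) + (y + y)

/-- Gödel's β-function: `x = a mod ((i+1)·b + 1)`. -/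
def BetaC (a b i x : M) : Prop :=
  x < (i + 1) * b + 1 ∧ ∃ q, a = q * ((i + 1) * b + 1) + x

/-- The sequence coded by `s` (via a Cantor pair of β-function data) has value `x`
at place `i`. -/
def SeqAt (s i x : M) : Prop := ∃ a b, IsPairC s a b ∧ BetaC a b i x

/-- `c` codes the M-finite set `X` of cardinality `card`: `c = ⟨card, s⟩` where `s`
codes the strictly increasing enumeration of `X` of length `card`. -/
def CodesFinset (c : M) (X : Set M) (card : M) : Prop :=
  ∃ s, IsPairC c card s ∧
    (∀ i, i < card → ∃ x, x ∈ X ∧ SeqAt s i x) ∧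
    (∀ i j x y, i < j → j < card → SeqAt s i x → SeqAt s j y → x < y) ∧
    (∀ x, x ∈ X ↔ ∃ i, i < card ∧ SeqAt s i x)

/-- `X` is an M-finite (coded) set. -/
def MFinite (X : Set M) : Prop := ∃ c card : M, CodesFinset c X card

/-- `d` codes an `e`-element subset `D` of `[0, y)`, i.e. an element of `[y]^e`. -/
def CodesTupleIn (d e y : M) (D : Set M) : Prop :=
  CodesFinset d D e ∧ ∀ z ∈ D, z < y

/-- `f` codes a (finite) function defined on all of `[0, a)`. -/
def CodesFunOn (f a : M) : Prop :=
  ∀ x, x < a → (∃ y, SeqAt f x y) ∧ ∀ y y', SeqAt f x y → SeqAt f x y' → y = y'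

/-- `X` is an M-coded subset of `[0, a)`. -/
def MCodedSubset (a : M) (X : Set M) : Prop :=
  MFinite X ∧ ∀ x ∈ X, x < a

end Coding

/-- An `M`-ultrafilter on `a`: an ultrafilter of the Boolean algebra of
M-finite subsets of `[0, a)`. -/
structure MUltra (M : Type) [lang.Structure M] (a : M) where
  sets : Set (Set M)
  mem_coded : ∀ X ∈ sets, MCodedSubset a X
  univ_mem : {x : M | x < a} ∈ sets
  superset_mem : ∀ X Y : Set M, X ∈ sets → MCodedSubset a Y → X ⊆ Y → Y ∈ sets
  inter_mem : ∀ X Y : Set M, X ∈ sets → Y ∈ sets → X ∩ Y ∈ sets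
  empty_not_mem : (∅ : Set M) ∉ sets
  ultra : ∀ X : Set M, MCodedSubset a X → X ∈ sets ∨ {x : M | x < a ∧ x ∉ X} ∈ sets

section Principles

variable (M : Type) [lang.Structure M]

/-- `F` is (the graph of) a Σ_m-definable injection from `[0, y)` into `[0, x)`. -/
def SigmaInjRel (m : ℕ) (F : M → M → Prop) (y x : M) : Prop :=
  SigmaDef2 m M F ∧
    (∀ u, u < y → ∃ v, v < x ∧ F u v) ∧
    (∀ u v v', u < y → F u v → F u v' → v = v') ∧
    (∀ u u' v, u < y → u' < y → F u v → F u' v → u = u')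

/-- There exists a Σ_m-definable injection from `[0, y)` into `[0, x)`. -/
def ExSigmaInj (m : ℕ) (y x : M) : Prop := ∃ F : M → M → Prop, SigmaInjRel M m F y x

/-- There exists a Σ_m-definable injection from all of `M` into `[0, a)`. -/
def SigmaInjWhole (m : ℕ) (a : M) : Prop :=
  ∃ F : M → M → Prop, SigmaDef2 m M F ∧
    (∀ u, ∃ v, v < a ∧ F u v) ∧
    (∀ u v v', F u v → F u v' → v = v') ∧
    (∀ u u' v, F u v → F u' v → u = u')

/-- CARD(Σ_m): no Σ_m-definable multivalued map sends `M` injectively below `a`. -/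
def CARD (m : ℕ) : Prop :=
  ∀ F : M → M → Prop, SigmaDef2 m M F → ∀ a : M,
    (∀ x, ∃ y, y < a ∧ F x y) →
      ∃ x0 x1 y, x0 ≠ x1 ∧ y < a ∧ F x0 y ∧ F x1 y

/-- GPHP(Σ_m): for every `x` there is `y` with no Σ_m-definable injection of
`[0,y)` into `[0,x)`. -/
def GPHP (m : ℕ) : Prop := ∀ x : M, ∃ y : M, ¬ExSigmaInj M m y x

/-- WPHP(Σ_m): for `x > 0` there is no Σ_m-definable injection of `[0,2x)` into `[0,x)`. -/
def WPHP (m : ℕ) : Prop := ∀ x : M, 0 < x → ¬ExSigmaInj M m (x + x) x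

/-- `C` is a Σ_m-definable `k`-coloring of `[y]^e` (acting on codes of
`e`-element subsets of `[0,y)`, independently of the chosen code). -/
def IsColoring (m : ℕ) (e y k : M) (C : M → M → Prop) : Prop :=
  SigmaDef2 m M C ∧
    (∀ d D, CodesTupleIn d e y D → ∃ i, i < k ∧ C d i) ∧
    (∀ d d' D i i', CodesTupleIn d e y D → CodesTupleIn d' e y D → C d i → C d' i' → i = i')

/-- FRT^e_k(Σ_m): every Σ_m-definable `k`-coloring of some `[y]^e` has an
M-finite homogeneous set of cardinality `x`, for every `x`. -/
def FRT (m : ℕ) (e k : M) : Prop :=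
  ∀ x : M, ∃ y : M, ∀ C : M → M → Prop, IsColoring M m e y k C →
    ∃ (c : M) (H : Set M), CodesFinset c H x ∧ (∀ z ∈ H, z < y) ∧
      ∃ i, ∀ d D, CodesFinset d D e → D ⊆ H → C d i

/-- fairFRT^e_k(Σ_m): the homogeneous set is required to be given as the range of a
Σ_m-definable injection from `[0,x)` into `[0,y)`. -/
def FairFRT (m : ℕ) (e k : M) : Prop :=
  ∀ x : M, ∃ y : M, ∀ C : M → M → Prop, IsColoring M m e y k C →
    ∃ H : M → M → Prop, SigmaInjRel M m H x y ∧
      ∃ i, ∀ d D, CodesFinset d D e → (∀ z ∈ D, ∃ u, u < x ∧ H u z) → C d i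

/-- `C` is a Σ_m-definable `k`-coloring of `[0, y)`. -/
def IsColoring1 (m : ℕ) (y k : M) (C : M → M → Prop) : Prop :=
  SigmaDef2 m M C ∧
    (∀ z, z < y → ∃ i, i < k ∧ C z i) ∧
    (∀ z i i', z < y → C z i → C z i' → i = i')

/-- FRT¹_k(Σ_m): every Σ_m-definable `k`-coloring of some `[0,y)` has an M-finite
homogeneous set of cardinality `x`, for every `x`. -/
def FRT1 (m : ℕ) (k : M) : Prop :=
  ∀ x : M, ∃ y : M, ∀ C : M → M → Prop, IsColoring1 M m y k C →
    ∃ (c : M) (H : Set M), CodesFinset c H x ∧ (∀ z ∈ H, z < y) ∧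
      ∃ i, ∀ z ∈ H, C z i

/-- fairFRT¹_k(Σ_m). -/
def FairFRT1 (m : ℕ) (k : M) : Prop :=
  ∀ x : M, ∃ y : M, ∀ C : M → M → Prop, IsColoring1 M m y k C →
    ∃ H : M → M → Prop, SigmaInjRel M m H x y ∧
      ∃ i, ∀ u v, u < x → H u v → C v i

end Principles

section Approx

variable {M : Type} [lang.Structure M]

/-- `f` is (the graph of) a partial function. -/
def IsPartialFun (f : M → M → Prop) : Prop := ∀ x y y', f x y → f x y' → y = y'

/-- `s` codes an approximation to the partial function `f` of length `b`. -/
def IsApprox (f : M → M → Prop) (s b : M) : Prop :=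
  (∀ i, i < b → ∃ v, SeqAt s i v) ∧
    (∀ i u v x y, i + 1 < b → SeqAt s i u → SeqAt s (i + 1) v → x ≤ u → f x y → y ≤ v)

/-- `s` codes a `g`-stretched approximation to the partial function `f` of length `b`. -/
def IsStretchedApprox (f g : M → M → Prop) (s b : M) : Prop :=
  (∀ i, i < b → ∃ v, SeqAt s i v) ∧
    (∀ i u w v x y, i + 1 < b → SeqAt s i u → g u w → SeqAt s (i + 1) v →
      x ≤ w → f x y → y ≤ v)

/-- The eventual (limit) value of `fun s => h s ·` is `x`. -/
def EvLim (h : M → M → Prop) (x : M) : Prop := ∃ s : M, ∀ t, s < t → h t x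

end Approx

/-- PΣ_m: every partial Σ_m-definable function admits approximations of every length. -/
def PSig (m : ℕ) (M : Type) [lang.Structure M] : Prop :=
  ∀ f : M → M → Prop, SigmaDef2 m M f → IsPartialFun f → ∀ b : M, ∃ s, IsApprox f s b

section Extensions

variable (M N : Type) [lang.Structure M] [lang.Structure N]

/-- `g : M → N` is Σ_m-elementary: Σ_m formulas with parameters from `M` transfer. -/
def SigmaElem (m : ℕ) (g : M → N) : Prop :=
  ∀ (p : ℕ) (φ : lang.BoundedFormula (Fin p) 0), SigmaFm m 0 φ →
    ∀ v : Fin p → M, (φ.Realize v finZeroElim ↔ φ.Realize (g ∘ v) finZeroElim)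

/-- The extension `g : M → N` is cofinal. -/
def Cofinal (g : M → N) : Prop := ∀ z : N, ∃ x : M, z ≤ g x

/-- `[0,a]^M = [0,a]^N`: every element of `N` below `g a` comes from `M`. -/
def SameBelow (g : M → N) (a : M) : Prop := ∀ z : N, z ≤ g a → ∃ x : M, g x = z

end Extensions

section Ramsey

variable {M : Type} [lang.Structure M]

/-- `f` is an M-coded `k`-coloring of `[y]^e` (assigning colors to codes of
`e`-subsets of `[0,y)`, independently of the code). -/
def CodedColoring (f e y k : M) : Prop :=
  (∀ d D, CodesTupleIn d e y D → ∃ i, i < k ∧ SeqAt f d i) ∧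
    (∀ d d' D i i', CodesTupleIn d e y D → CodesTupleIn d' e y D →
      SeqAt f d i → SeqAt f d' i' → i = i')

/-- The coded coloring `f` of `[y]^e` has an M-coded homogeneous set of cardinality `x`. -/
def CodedHomog (f e y x : M) : Prop :=
  ∃ (c : M) (H : Set M), CodesFinset c H x ∧ (∀ z ∈ H, z < y) ∧
    ∃ i, ∀ d D, CodesFinset d D e → D ⊆ H → SeqAt f d i

/-- `y = r(x, e, k)`: `y` is the least size guaranteeing coded homogeneous sets of
cardinality `x` for all coded `k`-colorings of `e`-subsets. -/
def IsRamsey (x e k y : M) : Prop :=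
  (∀ f, CodedColoring f e y k → CodedHomog f e y x) ∧
    (∀ y', y' < y → ∃ f, CodedColoring f e y' k ∧ ¬CodedHomog f e y' x)

/-- `y = r^(b)(x, e, k)`: the `b`-th iterate of the Ramsey function inside `M`. -/
def IterRamsey (x e k b y : M) : Prop :=
  ∃ s : M, SeqAt s 0 x ∧ SeqAt s b y ∧ (∀ i, i ≤ b → ∃ u, SeqAt s i u) ∧
    (∀ i u v, i < b → SeqAt s i u → SeqAt s (i + 1) v → IsRamsey u e k v)

end Ramsey

end ArithFC

namespace ArithFC

section Sem

set_option linter.unusedSectionVars false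

variable {M : Type} [lang.Structure M]

/-- Put a new value in front of an environment. -/
def consEnv (y : M) (e : ℕ → M) : ℕ → M
  | 0 => y
  | i + 1 => e i

/-- Lift a renaming under a binder. -/
def upRen (r : ℕ → ℕ) : ℕ → ℕ
  | 0 => 0
  | i + 1 => r i + 1

theorem consEnv_up (y : M) (e : ℕ → M) (r : ℕ → ℕ) :
    (fun i => consEnv y e (upRen r i)) = consEnv y (fun i => e (r i)) := by
  funext i; cases i <;> rfl

/-- Semantic polynomial functions of an environment. -/
inductive Pol : ((ℕ → M) → M) → Prop
  | var (i : ℕ) : Pol (fun e => e i)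
  | zero : Pol (fun _ => 0)
  | one : Pol (fun _ => 1)
  | add {s t} : Pol s → Pol t → Pol (fun e => s e + t e)
  | mul {s t} : Pol s → Pol t → Pol (fun e => s e * t e)

/-- Semantic bounded relations. -/
inductive D0 : ((ℕ → M) → Prop) → Prop
  | falsum : D0 (fun _ => False)
  | eq {s t} : Pol s → Pol t → D0 (fun e => s e = t e)
  | lt {s t} : Pol s → Pol t → D0 (fun e => s e < t e)
  | imp {R S} : D0 R → D0 S → D0 (fun e => R e → S e)
  | ball {t R} : Pol t → D0 R → D0 (fun e => ∀ y, y < t e → R (consEnv y e))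

/-- Quantifier on the first variable. -/
def Qt (b : Bool) (R : (ℕ → M) → Prop) : (ℕ → M) → Prop := fun e =>
  match b with
  | true => ∃ y, R (consEnv y e)
  | false => ∀ y, R (consEnv y e)

/-- Closure under one kind of quantifier. -/
inductive QC (b : Bool) (B : ((ℕ → M) → Prop) → Prop) : ((ℕ → M) → Prop) → Prop
  | base {R} : B R → QC b B R
  | q {R} : QC b B R → QC b B (Qt b R)

/-- Semantic hierarchy. -/
def Hier : ℕ → Bool → ((ℕ → M) → Prop) → Prop
  | 0, _ => D0
  | m + 1, b => QC b (Hier m (!b))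

theorem Hier.ofD0 {R : (ℕ → M) → Prop} (h : D0 R) : ∀ m b, Hier m b R
  | 0, _ => h
  | m + 1, b => QC.base (Hier.ofD0 h m (!b))

theorem Pol.ren {t : (ℕ → M) → M} (h : Pol t) (r : ℕ → ℕ) : Pol (fun e => t (fun i => e (r i))) := by
  induction h with
  | var i => exact Pol.var _
  | zero => exact Pol.zero
  | one => exact Pol.one
  | add _ _ h1 h2 => exact Pol.add h1 h2
  | mul _ _ h1 h2 => exact Pol.mul h1 h2

theorem D0.ren {R : (ℕ → M) → Prop} (h : D0 R) :
    ∀ r : ℕ → ℕ, D0 (fun e => R (fun i => e (r i))) := by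
  induction h with
  | falsum => exact fun _ => D0.falsum
  | eq h1 h2 => exact fun r => D0.eq (h1.ren r) (h2.ren r)
  | lt h1 h2 => exact fun r => D0.lt (h1.ren r) (h2.ren r)
  | imp _ _ h1 h2 => exact fun r => D0.imp (h1 r) (h2 r)
  | ball ht _ ih =>
    intro r
    have := D0.ball (ht.ren r) (ih (upRen r))
    simpa only [consEnv_up] using this

theorem QC.ren {b : Bool} {B : ((ℕ → M) → Prop) → Prop}
    (hB : ∀ R, B R → ∀ r : ℕ → ℕ, B (fun e => R (fun i => e (r i))))
    {R : (ℕ → M) → Prop} (h : QC b B R) : ∀ r : ℕ → ℕ, QC b B (fun e => R (fun i => e (r i))) := by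
  induction h with
  | base h => exact fun r => QC.base (hB _ h r)
  | q h ih =>
    intro r
    have := QC.q (ih (upRen r))
    convert this using 1
    funext e
    cases b <;> simp only [Qt, consEnv_up]

theorem Hier.ren : ∀ (m : ℕ) (b : Bool) (R : (ℕ → M) → Prop), Hier m b R →
    ∀ r : ℕ → ℕ, Hier m b (fun e => R (fun i => e (r i)))
  | 0, _, _, h, r => D0.ren h r
  | m + 1, b, _, h, r => QC.ren (Hier.ren m (!b)) h r

/-- Conjunction or disjunction. -/
def Op (c : Bool) (P Q : Prop) : Prop :=
  match c with
  | true => P ∨ Q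
  | false => P ∧ Q

theorem D0.op (c : Bool) {R S : (ℕ → M) → Prop} (h : D0 R) (h' : D0 S) :
    D0 (fun e => Op c (R e) (S e)) := by
  cases c
  · have := D0.imp (D0.imp h (D0.imp h' D0.falsum)) D0.falsum
    convert this using 1
    funext e; simp only [Op]; apply propext; tauto
  · have := D0.imp (D0.imp h D0.falsum) h'
    convert this using 1
    funext e; simp only [Op]; apply propext; tauto

theorem Op.comm (c : Bool) (P Q : Prop) : Op c P Q = Op c Q P := by
  cases c
  · exact propext and_comm
  · exact propext or_comm

theorem QC.pull (c b : Bool) (R S : (ℕ → M) → Prop) :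
    (fun e => Op c (Qt b R e) (S e)) =
      Qt b (fun e => Op c (R e) (S (fun i => e (i + 1)))) := by
  have hne : Nonempty M := ⟨0⟩
  funext e
  have : ∀ y, (fun i => consEnv y e (i + 1)) = e := fun y => rfl
  cases b <;> cases c <;> simp only [Qt, Op, this] <;> apply propext
  · exact forall_and_right _ _ |>.symm
  · exact forall_or_right.symm
  · exact exists_and_right.symm
  · constructor
    · rintro (⟨y, h⟩ | h)
      · exact ⟨y, Or.inl h⟩
      · exact ⟨0, Or.inr h⟩
    · rintro ⟨y, h | h⟩
      · exact Or.inl ⟨y, h⟩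
      · exact Or.inr h

theorem Hier.op (c : Bool) : ∀ (m : ℕ) (b : Bool) (R S : (ℕ → M) → Prop), Hier m b R → Hier m b S →
    Hier m b (fun e => Op c (R e) (S e))
  | 0, _, _, _, h, h' => D0.op c h h'
  | m + 1, b, R, S, h, h' => by
    have ih := Hier.op c m (!b)
    change QC b (Hier m (!b)) R at h
    change QC b (Hier m (!b)) S at h'
    change QC b (Hier m (!b)) _
    induction h generalizing S with
    | @base R h =>
      suffices ∀ R : (ℕ → M) → Prop, Hier m (!b) R →
          QC b (Hier m (!b)) (fun e => Op c (R e) (S e)) from this R h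
      clear h R
      induction h' with
      | base h' => exact fun R h => QC.base (ih _ _ h h')
      | @q S h' ih2 =>
        intro R h
        have e1 : (fun e => Op c (R e) (Qt b S e)) = fun e => Op c (Qt b S e) (R e) := by
          funext e; exact Op.comm _ _ _
        rw [e1, QC.pull]
        apply QC.q
        have := ih2 (fun e => R (fun i => e (i + 1))) (Hier.ren _ _ _ h _)
        convert this using 2
        exact iff_of_eq (Op.comm _ _ _)
    | q h ih2 =>
      rw [QC.pull]
      apply QC.q
      exact ih2 _ (QC.ren (Hier.ren m (!b)) h' _)

theorem Hier.and {m b} {R S : (ℕ → M) → Prop} (h : Hier m b R) (h' : Hier m b S) :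
    Hier m b (fun e => R e ∧ S e) := Hier.op false m b R S h h'

theorem Hier.or {m b} {R S : (ℕ → M) → Prop} (h : Hier m b R) (h' : Hier m b S) :
    Hier m b (fun e => R e ∨ S e) := Hier.op true m b R S h h'

theorem Hier.ex {m} {R : (ℕ → M) → Prop} (h : Hier (m + 1) true R) :
    Hier (m + 1) true (fun e => ∃ y, R (consEnv y e)) := QC.q h

/-! From formulas to relations -/

theorem pol_of_term {β : Type} (t : lang.Term β) (r : β → ℕ) :
    Pol (M := M) (fun e => t.realize (fun a => e (r a))) := by
  induction t with
  | var a => exact Pol.var _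
  | func f ts ih =>
    cases f with
    | zero =>
      have : ∀ e : ℕ → M, (Term.func (L := lang) Func.zero ts).realize (fun a => e (r a)) = 0 := by
        intro e
        change Structure.funMap _ _ = Structure.funMap _ _
        congr 1; funext i; exact i.elim0
      simp only [this]; exact Pol.zero
    | one =>
      have : ∀ e : ℕ → M, (Term.func (L := lang) Func.one ts).realize (fun a => e (r a)) = 1 := by
        intro e
        change Structure.funMap _ _ = Structure.funMap _ _
        congr 1; funext i; exact i.elim0
      simp only [this]; exact Pol.one
    | add =>
      have : ∀ e : ℕ → M, (Term.func (L := lang) Func.add ts).realize (fun a => e (r a)) =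
          (ts 0).realize (fun a => e (r a)) + (ts 1).realize (fun a => e (r a)) := by
        intro e
        change Structure.funMap _ _ = Structure.funMap _ _
        congr 1; funext i; fin_cases i <;> rfl
      simp only [this]; exact Pol.add (ih 0) (ih 1)
    | mul =>
      have : ∀ e : ℕ → M, (Term.func (L := lang) Func.mul ts).realize (fun a => e (r a)) =
          (ts 0).realize (fun a => e (r a)) * (ts 1).realize (fun a => e (r a)) := by
        intro e
        change Structure.funMap _ _ = Structure.funMap _ _
        congr 1; funext i; fin_cases i <;> rfl
      simp only [this]; exact Pol.mul (ih 0) (ih 1)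

theorem pol_of_term' {α : Type} {n : ℕ} (t : lang.Term (α ⊕ Fin n)) (r : α ⊕ Fin n → ℕ) :
    Pol (M := M) (fun e => t.realize
      (Sum.elim (fun a => e (r (Sum.inl a))) (fun i => e (r (Sum.inr i))))) := by
  have := pol_of_term (M := M) t r
  convert this using 3
  funext a; cases a <;> rfl

/-- Lift of variable placement under a binder. -/
def upPl {α : Type} {n : ℕ} (r : α ⊕ Fin n → ℕ) : α ⊕ Fin (n + 1) → ℕ :=
  Sum.elim (fun a => r (Sum.inl a) + 1) (Fin.snoc (fun i => r (Sum.inr i) + 1) 0)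

theorem upPl_inr {α : Type} {n : ℕ} (r : α ⊕ Fin n → ℕ) (e : ℕ → M) (y : M) :
    (fun i => consEnv y e (upPl r (Sum.inr i))) = Fin.snoc (fun i => e (r (Sum.inr i))) y := by
  funext i
  refine Fin.lastCases ?_ (fun i => ?_) i
  · simp [upPl, consEnv]
  · simp [upPl, consEnv]

theorem upPl_inl {α : Type} {n : ℕ} (r : α ⊕ Fin n → ℕ) (e : ℕ → M) (y : M) :
    (fun a => consEnv y e (upPl r (Sum.inl a))) = fun a => e (r (Sum.inl a)) := rfl

theorem realize_ltFm {α : Type} {n : ℕ} (t u : lang.Term (α ⊕ Fin n)) (v : α → M) (xs : Fin n → M) :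
    (ltFm t u).Realize v xs ↔ t.realize (Sum.elim v xs) < u.realize (Sum.elim v xs) := by
  change Structure.RelMap _ _ ↔ Structure.RelMap _ _
  apply iff_of_eq
  congr 1; funext i; fin_cases i <;> rfl

theorem realize_bdAll {α : Type} {n : ℕ} (t : lang.Term (α ⊕ Fin n))
    (φ : lang.BoundedFormula α (n + 1)) (v : α → M) (xs : Fin n → M) :
    (BoundedFormula.all ((ltFm (Term.var (Sum.inr (Fin.last n))) (t.liftAt 1 n)).imp φ)).Realize v xs
      ↔ ∀ y, y < t.realize (Sum.elim v xs) → φ.Realize v (Fin.snoc xs y) := by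
  simp only [BoundedFormula.realize_all, BoundedFormula.realize_imp, realize_ltFm]
  apply forall_congr'
  intro y
  have h1 : (t.liftAt 1 n).realize (Sum.elim v (Fin.snoc xs y : Fin (n + 1) → M)) =
      t.realize (Sum.elim v xs) := by
    rw [Term.realize_liftAt]
    congr 1
    funext a
    rcases a with a | i
    · rfl
    · simp only [Function.comp, Sum.map_inr, Sum.elim_inr, i.2, if_true]
      exact Fin.snoc_castSucc (α := fun _ => M) _ _ _
  rw [h1]
  simp

theorem d0_of_formula {α : Type} {n : ℕ} {φ : lang.BoundedFormula α n} (h : IsDelta0 n φ) :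
    ∀ r : α ⊕ Fin n → ℕ, D0 (M := M) (fun e => φ.Realize
      (fun a => e (r (Sum.inl a))) (fun i => e (r (Sum.inr i)))) := by
  induction h with
  | falsum n => exact fun r => D0.falsum
  | equal n t u => exact fun r => D0.eq (pol_of_term' t r) (pol_of_term' u r)
  | rel n l R ts =>
    intro r
    cases R with
    | lt =>
      have := D0.lt (M := M) (pol_of_term' (ts 0) r) (pol_of_term' (ts 1) r)
      convert this using 1
      funext e
      rw [← realize_ltFm]
      have hts : ts = ![ts 0, ts 1] := by funext i; fin_cases i <;> rfl
      unfold ltFm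
      rw [← hts]
  | imp n _ _ h1 h2 => exact fun r => D0.imp (h1 r) (h2 r)
  | bdAll n t _ ih =>
    intro r
    have := D0.ball (pol_of_term' t r) (ih (upPl r))
    convert this using 1
    funext e
    rw [realize_bdAll]
    simp only [upPl_inr, upPl_inl]

mutual
theorem hier_of_sigma {α : Type} : ∀ {m n : ℕ} {φ : lang.BoundedFormula α n}, SigmaFm m n φ →
    ∀ r : α ⊕ Fin n → ℕ, Hier (M := M) m true (fun e => φ.Realize
      (fun a => e (r (Sum.inl a))) (fun i => e (r (Sum.inr i))))
  | _, _, _, .delta0 m _ h, r => Hier.ofD0 (d0_of_formula h r) m true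
  | _, _, _, .ofPi _ _ h, r => QC.base (hier_of_pi h r)
  | _, _, _, .ex m n h, r => by
    have := QC.q (hier_of_sigma h (upPl r))
    change QC _ _ _
    convert this using 1
    funext e
    simp only [Qt, upPl_inr, upPl_inl, BoundedFormula.realize_ex]
theorem hier_of_pi {α : Type} : ∀ {m n : ℕ} {φ : lang.BoundedFormula α n}, PiFm m n φ →
    ∀ r : α ⊕ Fin n → ℕ, Hier (M := M) m false (fun e => φ.Realize
      (fun a => e (r (Sum.inl a))) (fun i => e (r (Sum.inr i))))
  | _, _, _, .delta0 m _ h, r => Hier.ofD0 (d0_of_formula h r) m false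
  | _, _, _, .ofSigma _ _ h, r => QC.base (hier_of_sigma h r)
  | _, _, _, .all m n h, r => by
    have := QC.q (hier_of_pi h (upPl r))
    change QC _ _ _
    convert this using 1
    funext e
    simp only [Qt, upPl_inr, upPl_inl, BoundedFormula.realize_all]
end

/-! From relations to formulas -/

theorem term_of_pol {β : Type} {t : (ℕ → M) → M} (h : Pol t) (τ : ℕ → β) :
    ∃ T : lang.Term β, ∀ v : β → M, T.realize v = t (fun i => v (τ i)) := by
  induction h with
  | var i => exact ⟨Term.var (τ i), fun v => rfl⟩
  | zero =>
    refine ⟨Term.func (L := lang) Func.zero ![], fun v => ?_⟩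
    change Structure.funMap _ _ = Structure.funMap _ _
    congr 1; funext i; exact i.elim0
  | one =>
    refine ⟨Term.func (L := lang) Func.one ![], fun v => ?_⟩
    change Structure.funMap _ _ = Structure.funMap _ _
    congr 1; funext i; exact i.elim0
  | add _ _ h1 h2 =>
    obtain ⟨S, hS⟩ := h1
    obtain ⟨T, hT⟩ := h2
    refine ⟨Term.func (L := lang) Func.add ![S, T], fun v => ?_⟩
    beta_reduce
    rw [← hS, ← hT]
    change Structure.funMap _ _ = Structure.funMap _ _
    congr 1; funext i; fin_cases i <;> rfl
  | mul _ _ h1 h2 =>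
    obtain ⟨S, hS⟩ := h1
    obtain ⟨T, hT⟩ := h2
    refine ⟨Term.func (L := lang) Func.mul ![S, T], fun v => ?_⟩
    beta_reduce
    rw [← hS, ← hT]
    change Structure.funMap _ _ = Structure.funMap _ _
    congr 1; funext i; fin_cases i <;> rfl

/-- Lift of a variable assignment under a binder. -/
def upAs {α : Type} {n : ℕ} (τ : ℕ → α ⊕ Fin n) : ℕ → α ⊕ Fin (n + 1)
  | 0 => Sum.inr (Fin.last n)
  | i + 1 => Sum.map id Fin.castSucc (τ i)

theorem upAs_eq {α : Type} {n : ℕ} (τ : ℕ → α ⊕ Fin n) (v : α → M) (xs : Fin n → M) (y : M) :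
    (fun i => Sum.elim v (Fin.snoc xs y : Fin (n + 1) → M) (upAs τ i)) =
      consEnv y (fun i => Sum.elim v xs (τ i)) := by
  funext i
  cases i with
  | zero => simp [upAs, consEnv]
  | succ i =>
    simp only [upAs, consEnv]
    rcases τ i with a | j <;> simp

theorem formula_of_d0 {R : (ℕ → M) → Prop} (h : D0 R) : ∀ {α : Type} {n : ℕ} (τ : ℕ → α ⊕ Fin n),
    ∃ φ : lang.BoundedFormula α n, IsDelta0 n φ ∧
      ∀ v xs, φ.Realize v xs ↔ R (fun i => Sum.elim v xs (τ i)) := by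
  induction h with
  | falsum => exact fun τ => ⟨_, IsDelta0.falsum _, fun _ _ => Iff.rfl⟩
  | eq h1 h2 =>
    intro α n τ
    obtain ⟨S, hS⟩ := term_of_pol h1 τ
    obtain ⟨T, hT⟩ := term_of_pol h2 τ
    refine ⟨_, IsDelta0.equal _ S T, fun v xs => ?_⟩
    beta_reduce
    rw [← hS, ← hT]; rfl
  | lt h1 h2 =>
    intro α n τ
    obtain ⟨S, hS⟩ := term_of_pol h1 τ
    obtain ⟨T, hT⟩ := term_of_pol h2 τ
    refine ⟨ltFm S T, IsDelta0.rel _ _ _ _, fun v xs => ?_⟩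
    beta_reduce
    rw [← hS, ← hT, realize_ltFm]
  | imp _ _ h1 h2 =>
    intro α n τ
    obtain ⟨φ, h1, hS⟩ := h1 τ
    obtain ⟨ψ, h2, hT⟩ := h2 τ
    refine ⟨_, IsDelta0.imp _ h1 h2, fun v xs => ?_⟩
    beta_reduce
    rw [← hS, ← hT]; rfl
  | ball ht _ ih =>
    intro α n τ
    obtain ⟨T, hT⟩ := term_of_pol ht τ
    obtain ⟨φ, h1, hφ⟩ := ih (upAs τ)
    refine ⟨_, IsDelta0.bdAll _ T h1, fun v xs => ?_⟩
    rw [realize_bdAll, hT]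
    simp only [hφ, upAs_eq]

/-- Σ for `true`, Π for `false`. -/
def Fm {α : Type} (b : Bool) (m n : ℕ) (φ : lang.BoundedFormula α n) : Prop :=
  match b with
  | true => SigmaFm m n φ
  | false => PiFm m n φ

theorem formula_of_hier : ∀ (m : ℕ) (b : Bool) (R : (ℕ → M) → Prop), Hier m b R →
    ∀ {α : Type} {n : ℕ} (τ : ℕ → α ⊕ Fin n),
    ∃ φ : lang.BoundedFormula α n, Fm b m n φ ∧
      ∀ v xs, φ.Realize v xs ↔ R (fun i => Sum.elim v xs (τ i))
  | 0, b, R, h, α, n, τ => by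
    obtain ⟨φ, h1, h2⟩ := formula_of_d0 h τ
    refine ⟨φ, ?_, h2⟩
    cases b
    · exact PiFm.delta0 _ _ h1
    · exact SigmaFm.delta0 _ _ h1
  | m + 1, b, R, h, α, n, τ => by
    have IH := formula_of_hier m (!b)
    change QC b (Hier m (!b)) R at h
    induction h generalizing n with
    | base h =>
      obtain ⟨φ, h1, h2⟩ := IH _ h τ
      refine ⟨φ, ?_, h2⟩
      cases b
      · exact PiFm.ofSigma _ _ h1
      · exact SigmaFm.ofPi _ _ h1
    | q h ih =>
      obtain ⟨φ, h1, h2⟩ := ih _ (upAs τ)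
      cases b
      · refine ⟨φ.all, PiFm.all _ _ h1, fun v xs => ?_⟩
        simp only [BoundedFormula.realize_all, h2, upAs_eq, Qt]
      · refine ⟨φ.ex, SigmaFm.ex _ _ h1, fun v xs => ?_⟩
        simp only [BoundedFormula.realize_ex, h2, upAs_eq, Qt]

end Sem

section Ar

variable {R : Type} [CommSemiring R] [LinearOrder R] [IsStrictOrderedRing R]

theorem ar_rem (h0 : ∀ x : R, 0 ≤ x) (hd : ∀ x y : R, x < y → ∃ d, y = x + 1 + d)
    {q q' m x x' : R} (h : q * m + x = q' * m + x') (hx : x < m) (hx' : x' < m) : x = x' := by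
  have key : ∀ q q' x x' : R, q * m + x = q' * m + x' → x < m → ¬ q < q' := by
    intro q q' x x' h hx hq
    obtain ⟨d, rfl⟩ := hd _ _ hq
    have h1 : x = m + (d * m + x') := by
      apply add_left_cancel (a := q * m)
      rw [h]; ring
    have h2 : m ≤ m + (d * m + x') := le_add_of_nonneg_right (h0 _)
    rw [← h1] at h2
    exact absurd hx (not_lt.mpr h2)
  have hq : q = q' := le_antisymm (not_lt.mp (key _ _ _ _ h.symm hx')) (not_lt.mp (key _ _ _ _ h hx))
  subst hq
  exact add_left_cancel h

theorem ar_pair (h0 : ∀ x : R, 0 ≤ x) (hd : ∀ x y : R, x < y → ∃ d, y = x + 1 + d)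
    {x y x' y' : R} (h : (x + y) * (x + y + 1) + (y + y) = (x' + y') * (x' + y' + 1) + (y' + y')) :
    x = x' ∧ y = y' := by
  have key : ∀ x y x' y' : R,
      (x + y) * (x + y + 1) + (y + y) = (x' + y') * (x' + y' + 1) + (y' + y') →
      ¬ x + y < x' + y' := by
    intro x y x' y' h hq
    obtain ⟨d, hd⟩ := hd _ _ hq
    rw [hd] at h
    have h1 : y + y = (y + y) + ((x + x + 1 + 1) + (d * (x + y + 1) + d * (x + y + 1) + d * d + d) + (y' + y')) := by
      apply add_left_cancel (a := (x + y) * (x + y + 1))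
      rw [h]; ring
    have h2 : (x + x + 1 + 1) + (d * (x + y + 1) + d * (x + y + 1) + d * d + d) + (y' + y') = 0 :=
      (left_eq_add.mp h1)
    have h3 : (0 : R) < (x + x + 1 + 1) + (d * (x + y + 1) + d * (x + y + 1) + d * d + d) + (y' + y') := by
      have := h0 x; have := h0 y; have := h0 d; have := h0 y'
      positivity
    exact absurd h2 h3.ne'
  have hq : x + y = x' + y' := le_antisymm (not_lt.mp (key _ _ _ _ h.symm)) (not_lt.mp (key _ _ _ _ h))
  rw [hq] at h
  have h2 : y + y = y' + y' := add_left_cancel h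
  have h3 : y = y' := by
    rcases lt_trichotomy y y' with h | h | h
    · exact absurd h2 (add_lt_add h h).ne
    · exact h
    · exact absurd h2 (add_lt_add h h).ne'
  subst h3
  exact ⟨add_right_cancel hq, rfl⟩

end Ar

section Model

set_option linter.style.haveILetI false

variable {M : Type} [lang.Structure M]

/-- The semiring structure of a model. -/
@[reducible] def PAm.semiring (h : PAm M) : CommSemiring M where
  add_assoc := h.add_assoc
  add_comm := h.add_comm
  zero_add x := by rw [h.add_comm, h.add_zero]
  add_zero := h.add_zero
  mul_assoc := h.mul_assoc
  mul_comm := h.mul_comm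
  one_mul x := by rw [h.mul_comm, h.mul_one]
  mul_one := h.mul_one
  zero_mul x := by rw [h.mul_comm, h.mul_zero]
  mul_zero := h.mul_zero
  left_distrib := h.ldistrib
  right_distrib x y z := by rw [h.mul_comm, h.ldistrib, h.mul_comm z x, h.mul_comm z y]
  nsmul := nsmulRec

/-- The order of a model. -/
@[reducible] noncomputable def PAm.order (h : PAm M) : LinearOrder M where
  le_refl x := Or.inr rfl
  le_trans x y z := by
    rintro (h1 | rfl) (h2 | rfl)
    · exact Or.inl (h.lt_trans _ _ _ h1 h2)
    · exact Or.inl h1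
    · exact Or.inl h2
    · exact Or.inr rfl
  lt_iff_le_not_ge x y := by
    constructor
    · intro h1
      refine ⟨Or.inl h1, ?_⟩
      rintro (h2 | rfl)
      · exact h.lt_irrefl _ (h.lt_trans _ _ _ h1 h2)
      · exact h.lt_irrefl _ h1
    · rintro ⟨h1 | rfl, h2⟩
      · exact h1
      · exact absurd (Or.inr rfl) h2
  le_antisymm x y := by
    rintro (h1 | rfl) (h2 | h2)
    · exact absurd (h.lt_trans _ _ _ h1 h2) (h.lt_irrefl _)
    · exact h2.symm
    · rfl
    · rfl
  le_total x y := by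
    rcases h.lt_total x y with h1 | h1 | h1
    · exact Or.inl (Or.inl h1)
    · exact Or.inl (Or.inr h1)
    · exact Or.inr (Or.inl h1)
  toDecidableLE := Classical.decRel _

theorem PAm.ordered (h : PAm M) :
    letI := h.semiring
    letI := h.order
    IsStrictOrderedRing M := by
  letI := h.semiring
  letI := h.order
  have hle : ∀ a b : M, a ≤ b → ∀ c : M, c + a ≤ c + b := by
    rintro a b (h1 | rfl) c
    · rw [h.add_comm c a, h.add_comm c b]; exact Or.inl (h.add_lt_add _ _ _ h1)
    · exact Or.inr rfl
  have hr : ∀ a b c : M, a + b ≤ a + c → b ≤ c := by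
    intro a b c h1
    by_contra h2
    have h3 : c < b := not_le.mp h2
    have h4 := h.add_lt_add _ _ a h3
    rw [h.add_comm c a, h.add_comm b a] at h4
    exact absurd h4 (not_lt.mpr h1)
  haveI : IsOrderedCancelAddMonoid M :=
    { add_le_add_left := fun a b h1 c => by
        have := hle a b h1 c
        rwa [h.add_comm c a, h.add_comm c b] at this
      le_of_add_le_add_left := hr }
  exact
    { zero_le_one := Or.inl h.zero_lt_one
      exists_pair_ne := ⟨0, 1, fun e => by
        have := h.zero_lt_one; rw [← e] at this; exact h.lt_irrefl _ this⟩
      mul_lt_mul_of_pos_left := fun a h1 b c h2 => by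
        have := h.mul_lt_mul _ _ _ h2 h1
        rwa [h.mul_comm b a, h.mul_comm c a] at this
      mul_lt_mul_of_pos_right := fun a h1 b c h2 => h.mul_lt_mul _ _ _ h2 h1 }

theorem PAm.sub (h : PAm M) (x y : M) (hxy : x < y) : ∃ d, y = x + 1 + d := by
  obtain ⟨z, rfl⟩ := h.sub_exists _ _ hxy
  have hz : 0 < z := by
    rcases h.zero_le z with h1 | rfl
    · exact h1
    · rw [h.add_zero] at hxy; exact absurd hxy (h.lt_irrefl _)
  rcases h.discrete z hz with h1 | rfl
  · obtain ⟨d, rfl⟩ := h.sub_exists _ _ h1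
    exact ⟨d, (h.add_assoc _ _ _).symm⟩
  · exact ⟨0, by rw [h.add_zero]⟩

theorem pair_inj (h : PAm M) {z x y x' y' : M} (h1 : IsPairC z x y) (h2 : IsPairC z x' y') :
    x = x' ∧ y = y' := by
  letI := h.semiring
  letI := h.order
  haveI := h.ordered
  exact ar_pair h.zero_le h.sub (h1.symm.trans h2)

theorem beta_unique (h : PAm M) {a b i x x' : M} (h1 : BetaC a b i x) (h2 : BetaC a b i x') :
    x = x' := by
  letI := h.semiring
  letI := h.order
  haveI := h.ordered
  obtain ⟨h1, q, hq⟩ := h1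
  obtain ⟨h2, q', hq'⟩ := h2
  exact ar_rem h.zero_le h.sub (hq.symm.trans hq') h1 h2

/-! Definability -/

theorem sigmaDef_of_hier {m k : ℕ} {β : Type} [Fintype β] {R : (ℕ → M) → Prop}
    (hR : Hier m true R) (w : β → M) (τ : ℕ → Fin k ⊕ β) :
    IsSigmaDef m M (k := k) (fun v => R (fun i => Sum.elim v w (τ i))) := by
  let E := Fintype.equivFin β
  obtain ⟨φ, h1, h2⟩ := formula_of_hier m true R hR (α := Fin k ⊕ Fin (Fintype.card β)) (n := 0)
    (fun i => Sum.inl (Sum.map id E (τ i)))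
  refine ⟨Fintype.card β, φ, w ∘ E.symm, h1, fun v => ?_⟩
  rw [h2]
  beta_reduce
  apply iff_of_eq
  congr 1
  funext i
  rcases τ i with a | b <;> simp

theorem parity (m : ℕ) (hI : ISig (m + 1) M) (h : PAm M) (x : M) :
    ∃ q, x = q + q ∨ x = q + q + 1 := by
  have hR : Hier (M := M) (m + 1) true (fun e => ∃ y, (fun e : ℕ → M => e 1 = e 0 + e 0 ∨ e 1 = e 0 + e 0 + 1)
      (consEnv y e)) := by
    refine Hier.ex (R := fun e : ℕ → M => e 1 = e 0 + e 0 ∨ e 1 = e 0 + e 0 + 1) ?_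
    apply Hier.or
    · exact Hier.ofD0 (D0.eq (Pol.var _) (Pol.add (Pol.var _) (Pol.var _))) _ _
    · exact Hier.ofD0 (D0.eq (Pol.var _) (Pol.add (Pol.add (Pol.var _) (Pol.var _)) Pol.one)) _ _
  have hD := sigmaDef_of_hier (k := 1) (β := Empty) hR (fun e => e.elim) (fun _ => Sum.inl 0)
  refine hI {x | ∃ q, x = q + q ∨ x = q + q + 1} hD ⟨0, Or.inl ?_⟩ ?_ x
  · rw [h.add_zero]
  · rintro x ⟨q, rfl | rfl⟩
    · exact ⟨q, Or.inr rfl⟩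
    · refine ⟨q + 1, Or.inl ?_⟩
      letI := h.semiring
      ring

/-- The combined function. -/
def bigF (f g : M → M → Prop) (a : M) (u y : M) : Prop :=
  ∃ x, (u = x * (1 + 1 + 1 + 1) ∧
      y = x * (1 + 1 + 1 + 1) * (1 + 1 + 1 + 1) + (1 + 1 + 1 + 1) * (1 + 1 + 1 + 1) + a) ∨
    (u = x * (1 + 1 + 1 + 1) + 1 ∧ f x y) ∨
    (u = x * (1 + 1 + 1 + 1) + (1 + 1) ∧ g x y)

theorem bigF_def (m : ℕ) {f g : M → M → Prop} (hf : SigmaDef2 (m + 1) M f)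
    (hg : SigmaDef2 (m + 1) M g) (a : M) : SigmaDef2 (m + 1) M (bigF f g a) := by
  obtain ⟨p, φ, w, hφ, hφf⟩ := hf
  obtain ⟨q, ψ, w', hψ, hψg⟩ := hg
  let α := Fin 2 ⊕ ((Fin p ⊕ Fin q) ⊕ Unit)
  let ε : α → ℕ := Encodable.encode
  let τ : ℕ → α := fun i => (Encodable.decode i : Option α).getD (Sum.inl 0)
  have hτ : ∀ a, τ (ε a) = a := fun a => by simp [τ, ε]
  let W : (Fin p ⊕ Fin q) ⊕ Unit → M := Sum.elim (Sum.elim w w') (fun _ => a)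
  let r1 : (Fin 2 ⊕ Fin p) ⊕ Fin 0 → ℕ :=
    Sum.elim (Sum.elim ![0, ε (Sum.inl 1) + 1] (fun j => ε (Sum.inr (Sum.inl (Sum.inl j))) + 1))
      finZeroElim
  let r2 : (Fin 2 ⊕ Fin q) ⊕ Fin 0 → ℕ :=
    Sum.elim (Sum.elim ![0, ε (Sum.inl 1) + 1] (fun j => ε (Sum.inr (Sum.inl (Sum.inr j))) + 1))
      finZeroElim
  have H1 := hier_of_sigma (M := M) hφ r1
  have H2 := hier_of_sigma (M := M) hψ r2
  have P4 : Pol (M := M) (fun _ => 1 + 1 + 1 + 1) :=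
    Pol.add (Pol.add (Pol.add Pol.one Pol.one) Pol.one) Pol.one
  have P2 : Pol (M := M) (fun _ => 1 + 1) := Pol.add Pol.one Pol.one
  have Px : Pol (M := M) (fun e => e 0 * (1 + 1 + 1 + 1)) := Pol.mul (Pol.var 0) P4
  have D1 := Hier.ofD0 (D0.eq (Pol.var (ε (Sum.inl 0) + 1)) Px) (m + 1) true
  have D2 := Hier.ofD0 (D0.eq (Pol.var (ε (Sum.inl 1) + 1))
    (Pol.add (Pol.add (Pol.mul Px P4) (Pol.mul P4 P4)) (Pol.var (ε (Sum.inr (Sum.inr ())) + 1)))) (m + 1) true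
  have D3 := Hier.ofD0 (D0.eq (Pol.var (ε (Sum.inl 0) + 1)) (Pol.add Px Pol.one)) (m + 1) true
  have D4 := Hier.ofD0 (D0.eq (Pol.var (ε (Sum.inl 0) + 1)) (Pol.add Px P2)) (m + 1) true
  have H := Hier.ex (Hier.or (Hier.and D1 D2) (Hier.or (Hier.and D3 H1) (Hier.and D4 H2)))
  have key := sigmaDef_of_hier (k := 2) H W τ
  unfold SigmaDef2
  convert key using 1
  funext v
  unfold bigF
  congr 1
  funext x
  set e : ℕ → M := consEnv x (fun i => Sum.elim v W (τ i)) with he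
  have e0 : e 0 = x := rfl
  have es : ∀ b, e (ε b + 1) = Sum.elim v W b := fun b => by
    change Sum.elim v W (τ (ε b)) = _; rw [hτ]
  have F1 : ∀ y, f x y ↔ φ.Realize (Sum.elim ![x, y] w) finZeroElim := fun y => hφf ![x, y]
  have G1 : ∀ y, g x y ↔ ψ.Realize (Sum.elim ![x, y] w') finZeroElim := fun y => hψg ![x, y]
  have E1 : (fun b => e (r1 (Sum.inl b))) = Sum.elim ![x, v 1] w := by
    funext b
    rcases b with b | b
    · fin_cases b
      · rfl
      · exact es _
    · exact es _
  have E2 : (fun b => e (r2 (Sum.inl b))) = Sum.elim ![x, v 1] w' := by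
    funext b
    rcases b with b | b
    · fin_cases b
      · rfl
      · exact es _
    · exact es _
  have E3 : (fun i => e (r1 (Sum.inr i))) = finZeroElim := Subsingleton.elim _ _
  have E4 : (fun i => e (r2 (Sum.inr i))) = finZeroElim := Subsingleton.elim _ _
  rw [F1, G1, E1, E2, E3, E4, es, es, es, e0]
  rfl

theorem bigF_fun (h : PAm M) {f g : M → M → Prop} (hf : IsPartialFun f) (hg : IsPartialFun g)
    (a : M) : IsPartialFun (bigF f g a) := by
  letI := h.semiring
  letI := h.order
  haveI := h.ordered
  have h4 : (0 : M) < 1 + 1 + 1 + 1 := by positivity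
  have l0 : (0 : M) < 1 + 1 + 1 + 1 := h4
  have l1 : (1 : M) < 1 + 1 + 1 + 1 := by norm_num
  have l2 : (1 + 1 : M) < 1 + 1 + 1 + 1 := by norm_num
  have n01 : (0 : M) ≠ 1 := by norm_num
  have n02 : (0 : M) ≠ 1 + 1 := by norm_num
  have n12 : (1 : M) ≠ 1 + 1 := by norm_num
  have canc : ∀ {x x' : M}, x * (1 + 1 + 1 + 1) = x' * (1 + 1 + 1 + 1) → x = x' :=
    fun {x x'} hx => by
      rcases lt_trichotomy x x' with h1 | h1 | h1
      · exact absurd hx (mul_lt_mul_of_pos_right h1 h4).ne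
      · exact h1
      · exact absurd hx.symm (mul_lt_mul_of_pos_right h1 h4).ne
  have rem : ∀ {x x' r r' : M}, x * (1 + 1 + 1 + 1) + r = x' * (1 + 1 + 1 + 1) + r' →
      r < 1 + 1 + 1 + 1 → r' < 1 + 1 + 1 + 1 → r = r' :=
    fun h1 h2 h3 => ar_rem h.zero_le h.sub h1 h2 h3
  rintro u y y' ⟨x, hx⟩ ⟨x', hx'⟩
  rcases hx with ⟨e, hy⟩ | ⟨e, hy⟩ | ⟨e, hy⟩ <;> rcases hx' with ⟨e', hy'⟩ | ⟨e', hy'⟩ | ⟨e', hy'⟩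
  · rw [hy, hy', ← e, ← e']
  · exact absurd (rem ((add_zero _).trans (e.symm.trans e')) l0 l1) n01
  · exact absurd (rem ((add_zero _).trans (e.symm.trans e')) l0 l2) n02
  · exact absurd (rem ((add_zero _).trans (e'.symm.trans e)) l0 l1) n01
  · obtain rfl := canc (add_right_cancel (e.symm.trans e'))
    exact hf _ _ _ hy hy'
  · exact absurd (rem (e.symm.trans e') l1 l2) n12
  · exact absurd (rem ((add_zero _).trans (e'.symm.trans e)) l0 l2) n02
  · exact absurd (rem (e'.symm.trans e) l1 l2) n12
  · obtain rfl := canc (add_right_cancel (e.symm.trans e'))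
    exact hg _ _ _ hy hy'

theorem sample (m : ℕ) (hI : ISig (m + 1) M) (h : PAm M) (A B : M) :
    ∃ t, IsPairC t A (B * (1 + 1 + 1 + 1)) := by
  letI := h.semiring
  obtain ⟨c, hc | hc⟩ := parity m hI h A
  · refine ⟨c * (A + 1) + (1 + 1 + 1 + 1) * A * B + (1 + 1) * (1 + 1 + 1 + 1) * B * B + (1 + 1) * B + (1 + 1 + 1 + 1) * B, ?_⟩
    unfold IsPairC
    subst hc
    ring
  · refine ⟨A * (c + 1) + (1 + 1 + 1 + 1) * A * B + (1 + 1) * (1 + 1 + 1 + 1) * B * B + (1 + 1) * B + (1 + 1 + 1 + 1) * B, ?_⟩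
    unfold IsPairC
    subst hc
    ring

theorem four (m : ℕ) (hI : ISig (m + 1) M) (h : PAm M) (u : M) :
    ∃ x, x * (1 + 1 + 1 + 1) ≤ u ∧
      u * (1 + 1 + 1 + 1) + (1 + 1 + 1 + 1) ≤
        x * (1 + 1 + 1 + 1) * (1 + 1 + 1 + 1) + (1 + 1 + 1 + 1) * (1 + 1 + 1 + 1) := by
  letI := h.semiring
  letI := h.order
  haveI := h.ordered
  have hex : ∃ x r d : M, u = x * (1 + 1 + 1 + 1) + r ∧ r + d = 1 + 1 + 1 := by
    obtain ⟨c, hc | hc⟩ := parity m hI h u <;> obtain ⟨x, hx | hx⟩ := parity m hI h c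
    · exact ⟨x, 0, 1 + 1 + 1, by rw [hc, hx]; ring, by ring⟩
    · exact ⟨x, 1 + 1, 1, by rw [hc, hx]; ring, by ring⟩
    · exact ⟨x, 1, 1 + 1, by rw [hc, hx]; ring, by ring⟩
    · exact ⟨x, 1 + 1 + 1, 0, by rw [hc, hx]; ring, by ring⟩
  obtain ⟨x, r, d, hu, hr⟩ := hex
  refine ⟨x, ?_, ?_⟩
  · rw [hu]; exact le_add_of_nonneg_right (h.zero_le _)
  · have : x * (1 + 1 + 1 + 1) * (1 + 1 + 1 + 1) + (1 + 1 + 1 + 1) * (1 + 1 + 1 + 1) =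
        (u * (1 + 1 + 1 + 1) + (1 + 1 + 1 + 1)) + d * (1 + 1 + 1 + 1) := by
      rw [hu, ← hr]; ring
    rw [this]; exact le_add_of_nonneg_right (h.zero_le _)

theorem main_lemma (m : ℕ) (hI : ISig (m + 1) M) (h : PAm M) (hP : PSig (m + 1) M)
    {f g : M → M → Prop} (hf : SigmaDef2 (m + 1) M f) (hff : IsPartialFun f)
    (hg : SigmaDef2 (m + 1) M g) (hgf : IsPartialFun g) (a b : M) :
    ∃ t, IsStretchedApprox f g t b ∧ ∃ v, SeqAt t 0 v ∧ a ≤ v := by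
  obtain ⟨s, hs1, hs2⟩ := hP _ (bigF_def m hf hg a) (bigF_fun h hff hgf a)
    (b * (1 + 1 + 1 + 1) + (1 + 1 + 1 + 1))
  have hfour := four m hI h
  have hsamp := sample m hI h
  letI := h.semiring
  letI := h.order
  haveI := h.ordered
  have h4 : (0 : M) < 1 + 1 + 1 + 1 := by positivity
  have l3 : (1 + 1 + 1 : M) < 1 + 1 + 1 + 1 := by norm_num
  obtain ⟨v0, A, B, hAB, -⟩ := hs1 0 (lt_of_lt_of_le h4 (le_add_of_nonneg_left (h.zero_le _)))
  obtain ⟨t, ht⟩ := hsamp A B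
  have modeq : ∀ i : M, (i + 1) * (B * (1 + 1 + 1 + 1)) + 1 =
      (i * (1 + 1 + 1 + 1) + (1 + 1 + 1) + 1) * B + 1 := fun i => by ring
  have tr : ∀ i v, SeqAt t i v ↔ SeqAt s (i * (1 + 1 + 1 + 1) + (1 + 1 + 1)) v := by
    intro i v
    constructor
    · rintro ⟨A', B', h1, h2⟩
      obtain ⟨rfl, rfl⟩ := pair_inj h ht h1
      refine ⟨A, B, hAB, ?_⟩
      unfold BetaC at h2 ⊢
      rw [modeq] at h2
      exact h2
    · rintro ⟨A', B', h1, h2⟩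
      obtain ⟨rfl, rfl⟩ := pair_inj h hAB h1
      refine ⟨A, B * (1 + 1 + 1 + 1), ht, ?_⟩
      unfold BetaC at h2 ⊢
      rw [modeq]
      exact h2
  -- growth
  have grow : ∀ j u v, j + 1 < b * (1 + 1 + 1 + 1) + (1 + 1 + 1 + 1) → SeqAt s j u →
      SeqAt s (j + 1) v → u * (1 + 1 + 1 + 1) + (1 + 1 + 1 + 1) + a ≤ v := by
    intro j u v hj hu hv
    obtain ⟨x, hx1, hx2⟩ := hfour u
    have := hs2 j u v (x * (1 + 1 + 1 + 1)) _ hj hu hv hx1 ⟨x, Or.inl ⟨rfl, rfl⟩⟩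
    exact le_trans (add_le_add_left hx2 a) this
  have len : ∀ i, i < b → i * (1 + 1 + 1 + 1) + (1 + 1 + 1) <
      b * (1 + 1 + 1 + 1) + (1 + 1 + 1 + 1) := by
    intro i hi
    exact add_lt_add (mul_lt_mul_of_pos_right hi h4) l3
  refine ⟨t, ⟨?_, ?_⟩, ?_⟩
  · intro i hi
    obtain ⟨v, hv⟩ := hs1 _ (len i hi)
    exact ⟨v, (tr i v).mpr hv⟩
  · intro i u w v x y hi hu hgw hv hxw hfy
    rw [tr] at hu hv
    have hL := len _ hi
    set L := b * (1 + 1 + 1 + 1) + (1 + 1 + 1 + 1) with hLdef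
    set j := i * (1 + 1 + 1 + 1) + (1 + 1 + 1) with hj
    have ej : (i + 1) * (1 + 1 + 1 + 1) + (1 + 1 + 1) = j + 1 + 1 + 1 + 1 := by rw [hj]; ring
    rw [ej] at hv hL
    have up : ∀ z : M, z + 1 < L → z < L := fun z hz =>
      lt_trans (lt_add_of_pos_right _ h.zero_lt_one) hz
    have hL3 := up _ hL
    have hL2 := up _ hL3
    have hL1 := up _ hL2
    obtain ⟨u1, hu1⟩ := hs1 _ hL1
    obtain ⟨u2, hu2⟩ := hs1 _ hL2
    obtain ⟨u3, hu3⟩ := hs1 _ hL3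
    have g1 := grow _ _ _ hL1 hu hu1
    have g3 := grow _ _ _ hL3 hu2 hu3
    have a1 : u * (1 + 1 + 1 + 1) + (1 + 1) ≤ u1 := by
      refine le_trans ?_ g1
      have : u * (1 + 1 + 1 + 1) + (1 + 1 + 1 + 1) + a =
        (u * (1 + 1 + 1 + 1) + (1 + 1)) + (1 + 1 + a) := by ring
      rw [this]; exact le_add_of_nonneg_right (h.zero_le _)
    have b1 : w ≤ u2 := hs2 _ _ _ _ _ hL2 hu1 hu2 a1 ⟨u, Or.inr (Or.inr ⟨rfl, hgw⟩)⟩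
    have hxu : x ≤ u2 := le_trans hxw b1
    have a3 : x * (1 + 1 + 1 + 1) + 1 ≤ u3 := by
      refine le_trans ?_ g3
      have : u2 * (1 + 1 + 1 + 1) + (1 + 1 + 1 + 1) + a =
        (u2 * (1 + 1 + 1 + 1) + 1) + (1 + 1 + 1 + a) := by ring
      rw [this]
      refine le_trans ?_ (le_add_of_nonneg_right (h.zero_le _))
      exact add_le_add_left (mul_le_mul_of_nonneg_right hxu h4.le) 1
    exact hs2 _ _ _ _ _ hL hu3 hv a3 ⟨x, Or.inr (Or.inl ⟨rfl, hfy⟩)⟩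
  · have hl : (1 + 1 + 1 : M) < b * (1 + 1 + 1 + 1) + (1 + 1 + 1 + 1) :=
      lt_of_lt_of_le l3 (le_add_of_nonneg_left (h.zero_le _))
    have hl2 : (1 + 1 : M) < b * (1 + 1 + 1 + 1) + (1 + 1 + 1 + 1) :=
      lt_trans (lt_add_of_pos_right _ h.zero_lt_one) hl
    obtain ⟨v, hv⟩ := hs1 _ hl
    obtain ⟨u, hu⟩ := hs1 _ hl2
    refine ⟨v, ?_, ?_⟩
    · rw [tr]
      have : (0 : M) * (1 + 1 + 1 + 1) + (1 + 1 + 1) = 1 + 1 + 1 := by ring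
      rw [this]; exact hv
    · exact le_trans (le_add_of_nonneg_left (h.zero_le _)) (grow _ _ _ hl hu hv)

theorem eq_def (m : ℕ) : SigmaDef2 (m + 1) M (fun x y => x = y) := by
  have H := Hier.ofD0 (D0.eq (M := M) (Pol.var 0) (Pol.var 1)) (m + 1) true
  have := sigmaDef_of_hier (k := 2) (β := Empty) H (fun e => e.elim)
    (fun i => Sum.inl (if i = 0 then 0 else 1))
  exact this

theorem eq_stretched {f : M → M → Prop} {s b : M}
    (h : IsStretchedApprox f (fun x y => x = y) s b) : IsApprox f s b :=
  ⟨h.1, fun i u v x y hi hu hv hx hf => h.2 i u u v x y hi hu rfl hv hx hf⟩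

end Model

end ArithFC

namespace ArithFC

/-- For every `n ≥ 1` the following are pairwise equivalent over
PA⁻ + IΣn: (1) PΣn; (2) approximations of any length with arbitrarily large first
entry; (3) `g`-stretched approximations of any length, for total Σn-definable `g`. -/
theorem statement_18 (n : ℕ) (hn : 1 ≤ n) (M : Type) [lang.Structure M]
    (hPA : PAm M) (hI : ISig n M) :
    (PSig n M ↔
      ∀ f : M → M → Prop, SigmaDef2 n M f → IsPartialFun f →
        ∀ a b : M, ∃ s, IsApprox f s b ∧ ∃ v, SeqAt s 0 v ∧ a ≤ v) ∧
      ((∀ f : M → M → Prop, SigmaDef2 n M f → IsPartialFun f →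
          ∀ a b : M, ∃ s, IsApprox f s b ∧ ∃ v, SeqAt s 0 v ∧ a ≤ v) ↔
        ∀ f g : M → M → Prop, SigmaDef2 n M f → IsPartialFun f →
          SigmaDef2 n M g → IsPartialFun g → (∀ x : M, ∃ y, g x y) →
          ∀ b : M, ∃ s, IsStretchedApprox f g s b) := by
  obtain ⟨m, rfl⟩ : ∃ m, n = m + 1 := ⟨n - 1, by omega⟩
  have eqf : IsPartialFun (fun x y : M => x = y) := fun x y y' h1 h2 => h1.symm.trans h2
  have h12 : PSig (m + 1) M → ∀ f : M → M → Prop, SigmaDef2 (m + 1) M f → IsPartialFun f →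
        ∀ a b : M, ∃ s, IsApprox f s b ∧ ∃ v, SeqAt s 0 v ∧ a ≤ v := by
    intro hP f hf hff a b
    obtain ⟨t, h1, h2⟩ := main_lemma m hI hPA hP hf hff (eq_def m) eqf a b
    exact ⟨t, eq_stretched h1, h2⟩
  have h21 : (∀ f : M → M → Prop, SigmaDef2 (m + 1) M f → IsPartialFun f →
        ∀ a b : M, ∃ s, IsApprox f s b ∧ ∃ v, SeqAt s 0 v ∧ a ≤ v) → PSig (m + 1) M := by
    intro H f hf hff b
    obtain ⟨s, hs, -⟩ := H f hf hff 0 b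
    exact ⟨s, hs⟩
  refine ⟨⟨h12, h21⟩, ?_, ?_⟩
  · intro H f g hf hff hg hgf _ b
    obtain ⟨t, h1, -⟩ := main_lemma m hI hPA (h21 H) hf hff hg hgf 0 b
    exact ⟨t, h1⟩
  · intro H
    refine h12 fun f hf hff b => ?_
    obtain ⟨s, hs⟩ := H f _ hf hff (eq_def m) eqf (fun x => ⟨x, rfl⟩) b
    exact ⟨s, eq_stretched hs⟩

end ArithFC
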